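/- arXiv:1906.06020 — 2 statements merged into one kernel-verified Lean document; each statement's English description precedes it below -/
import Mathlib

section
/- Convexity and unique minimizer of the marginal-likelihood computing-time function (Proposition A1(i)): for every fixed v > 0, the function CT_ML(x) := ((v+1)e^x − 1)/x is strictly convex on (0, ∞) and possesses a unique minimizer x*(v) ∈ (0, ∞). -/
open Set

/-! The derivative of `g x / x` is `(x * g' x - g x) / x ^ 2`, and for `x > 0` its second derivative
has the sign of `x ^ 2 * g'' x - 2 * x * g' x + 2 * g x`. For `g x = a * exp x - 1` with `1 ≤ a`
this is `a * exp x * (x ^ 2 - 2 * x + 2) - 2`, which is positive because `exp x` is at least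
`1 + x + x ^ 2 / 2` and `(1 + x + x ^ 2 / 2) * (x ^ 2 - 2 * x + 2) = 2 + x ^ 4 / 2`. When `1 < a`,
the numerator `x * g' x - g x` of the first derivative changes sign between `0` and `1`, and a
critical point of a strictly convex function is its unique minimizer. -/

section Convexity

variable {D : Set ℝ}

theorem strictConvexOn_of_hasDerivAt2_pos (hD : Convex ℝ D) {f f' f'' : ℝ → ℝ}
    (hf : ContinuousOn f D) (hf' : ∀ x ∈ interior D, HasDerivAt f (f' x) x)
    (hf'' : ∀ x ∈ interior D, HasDerivAt f' (f'' x) x) (hf''_pos : ∀ x ∈ interior D, 0 < f'' x) :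
    StrictConvexOn ℝ D f := by
  have f'_strictMono : StrictMonoOn f' (interior D) :=
    strictMonoOn_of_hasDerivWithinAt_pos hD.interior
      (fun x hx ↦ (hf'' x hx).continuousAt.continuousWithinAt)
      (fun x hx ↦ (hf'' x (interior_subset hx)).hasDerivWithinAt)
      (fun x hx ↦ hf''_pos x (interior_subset hx))
  exact (f'_strictMono.congr fun x hx ↦ (hf' x hx).deriv.symm).strictConvexOn_of_deriv hD hf

theorem existsUnique_isMinOn_of_strictConvexOn_of_hasDerivAt_zero {f : ℝ → ℝ} {x : ℝ}
    (hf : StrictConvexOn ℝ D f) (hx : x ∈ interior D) (hf' : HasDerivAt f 0 x) :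
    ∃! y, y ∈ D ∧ IsMinOn f D y := by
  have x_isMinOn : IsMinOn f D x :=
    hf.convexOn.isMinOn_of_rightDeriv_eq_zero hx
      (hf'.hasDerivWithinAt.derivWithin (uniqueDiffWithinAt_Ioi x))
  exact ⟨x, ⟨interior_subset hx, x_isMinOn⟩, fun y ⟨hy, y_isMinOn⟩ ↦
    hf.eq_of_isMinOn y_isMinOn x_isMinOn hy (interior_subset hx)⟩

end Convexity

section DivSelf

theorem hasDerivAt_div_self {g : ℝ → ℝ} {g' x : ℝ} (hg : HasDerivAt g g' x) (hx : x ≠ 0) :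
    HasDerivAt (fun y ↦ g y / y) ((x * g' - g x) / x ^ 2) x :=
  (hg.fun_div (hasDerivAt_id' x) hx).congr_deriv (by ring)

theorem hasDerivAt_deriv_div_self {g g' : ℝ → ℝ} {g'' x : ℝ} (hg : HasDerivAt g (g' x) x)
    (hg' : HasDerivAt g' g'' x) (hx : x ≠ 0) :
    HasDerivAt (fun y ↦ (y * g' y - g y) / y ^ 2)
      ((x ^ 2 * g'' - 2 * x * g' x + 2 * g x) / x ^ 3) x := by
  have numerator : HasDerivAt (fun y ↦ y * g' y - g y) (x * g'') x :=
    (((hasDerivAt_id' x).fun_mul hg').fun_sub hg).congr_deriv (by ring)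
  refine (numerator.fun_div (hasDerivAt_pow 2 x) (pow_ne_zero 2 hx)).congr_deriv ?_
  field_simp
  ring

theorem strictConvexOn_div_self {D : Set ℝ} (hD : Convex ℝ D) (hD_pos : D ⊆ Ioi 0)
    {g g' g'' : ℝ → ℝ} (hg : ContinuousOn g D)
    (hg' : ∀ x ∈ interior D, HasDerivAt g (g' x) x)
    (hg'' : ∀ x ∈ interior D, HasDerivAt g' (g'' x) x)
    (h_pos : ∀ x ∈ interior D, 0 < x ^ 2 * g'' x - 2 * x * g' x + 2 * g x) :
    StrictConvexOn ℝ D (fun x ↦ g x / x) := by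
  have pos_of_mem {x : ℝ} (hx : x ∈ interior D) : 0 < x := hD_pos (interior_subset hx)
  exact strictConvexOn_of_hasDerivAt2_pos hD
    (hg.div continuousOn_id fun x hx ↦ (hD_pos hx).ne')
    (fun x hx ↦ hasDerivAt_div_self (hg' x hx) (pos_of_mem hx).ne')
    (fun x hx ↦ hasDerivAt_deriv_div_self (hg' x hx) (hg'' x hx) (pos_of_mem hx).ne')
    (fun x hx ↦ div_pos (h_pos x hx) (pow_pos (pos_of_mem hx) 3))

end DivSelf

section Exp

theorem two_lt_exp_mul_sq_sub_two_mul_add_two {x : ℝ} (hx : 0 < x) :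
    2 < Real.exp x * (x ^ 2 - 2 * x + 2) := by
  have quadratic_nonneg : 0 ≤ x ^ 2 - 2 * x + 2 := by nlinarith [sq_nonneg (x - 1)]
  calc
    2 < 2 + x ^ 4 / 2 := lt_add_of_pos_right 2 (by positivity)
    _ = (1 + x + x ^ 2 / 2) * (x ^ 2 - 2 * x + 2) := by ring
    _ ≤ Real.exp x * (x ^ 2 - 2 * x + 2) :=
      mul_le_mul_of_nonneg_right (Real.quadratic_le_exp_of_nonneg hx.le) quadratic_nonneg

theorem hasDerivAt_mul_exp_sub_one (a x : ℝ) :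
    HasDerivAt (fun y ↦ a * Real.exp y - 1) (a * Real.exp x) x :=
  ((Real.hasDerivAt_exp x).const_mul a).sub_const 1

variable {a : ℝ}

theorem strictConvexOn_mul_exp_sub_one_div_self (ha : 1 ≤ a) :
    StrictConvexOn ℝ (Ioi 0) (fun x : ℝ ↦ (a * Real.exp x - 1) / x) := by
  refine strictConvexOn_div_self (convex_Ioi 0) subset_rfl (by fun_prop)
    (fun x _ ↦ hasDerivAt_mul_exp_sub_one a x)
    (fun x _ ↦ (Real.hasDerivAt_exp x).const_mul a) fun x hx ↦ ?_
  have key := two_lt_exp_mul_sq_sub_two_mul_add_two (interior_subset hx)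
  have scaled : Real.exp x * (x ^ 2 - 2 * x + 2) ≤ a * (Real.exp x * (x ^ 2 - 2 * x + 2)) :=
    le_mul_of_one_le_left (zero_lt_two.trans key).le ha
  linarith

theorem exists_hasDerivAt_mul_exp_sub_one_div_self_zero (ha : 1 < a) :
    ∃ x ∈ Ioo (0 : ℝ) 1, HasDerivAt (fun y ↦ (a * Real.exp y - 1) / y) 0 x := by
  let numerator (x : ℝ) : ℝ := x * (a * Real.exp x) - (a * Real.exp x - 1)
  have numerator_zero : numerator 0 < 0 := by simpa [numerator] using ha
  have numerator_one : 0 < numerator 1 := by simp [numerator]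
  obtain ⟨x, hx, numerator_eq_zero⟩ : ∃ x ∈ Ioo (0 : ℝ) 1, numerator x = 0 :=
    intermediate_value_Ioo zero_le_one (by fun_prop) ⟨numerator_zero, numerator_one⟩
  refine ⟨x, hx, (hasDerivAt_div_self (hasDerivAt_mul_exp_sub_one a x) hx.1.ne').congr_deriv ?_⟩
  exact div_eq_zero_iff.2 (.inl numerator_eq_zero)

end Exp

/-- **Proposition A1(i).**  For every fixed `v > 0`, the marginal-likelihood
computing-time function `CT_ML x = ((v+1) * exp x - 1) / x` is strictly convex
on `(0, ∞)` and possesses a unique minimizer there. -/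
theorem marginal_likelihood_computing_time_strictly_convex_unique_minimizer
    (v : ℝ) (hv : 0 < v) :
    StrictConvexOn ℝ (Ioi (0 : ℝ))
      (fun x : ℝ => ((v + 1) * Real.exp x - 1) / x)
    ∧ ∃! xstar : ℝ, xstar ∈ Ioi (0 : ℝ) ∧ ∀ y ∈ Ioi (0 : ℝ),
        ((v + 1) * Real.exp xstar - 1) / xstar ≤ ((v + 1) * Real.exp y - 1) / y := by
  have one_lt : 1 < v + 1 := lt_add_of_pos_left 1 hv
  have convex := strictConvexOn_mul_exp_sub_one_div_self one_lt.le
  obtain ⟨x, hx, critical⟩ := exists_hasDerivAt_mul_exp_sub_one_div_self_zero one_lt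
  have x_mem : x ∈ interior (Ioi 0) := by rw [interior_Ioi]; exact hx.1
  exact ⟨convex, existsUnique_isMinOn_of_strictConvexOn_of_hasDerivAt_zero convex x_mem critical⟩
end

section
/- Behaviour of the optimal log-likelihood variance for marginal likelihood estimation (Proposition A1(ii)): for v > 0, the unique minimizer x*(v) of CT_ML(x) = ((v+1)e^x − 1)/x on (0, ∞) lies in the interval (0, 1), satisfies the first-order condition (v+1) e^{x*(v)} (1 − x*(v)) = 1, is strictly increasing as a function of v, and converges to 1 as v → ∞. -/
open Set Filter

/-!
Setting the derivative of `CT_ML` to zero gives `(v + 1) * (exp x * (1 - x)) = 1`, so `x*(v)` is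
obtained by inverting `x ↦ exp x * (1 - x)`, whose derivative `-x * exp x` is negative for `x > 0`:
the larger `v + 1`, the larger `x*(v)`. Since `exp x ≥ 1`, the same equation squeezes `x*(v)`
between `1 - 1 / (v + 1)` and `1`.
-/

/-- The computing time `CT_ML` of marginal likelihood estimation to fixed precision, up to a
constant factor, as a function of the variance `x > 0` of the log-likelihood estimator; `v` is the
variance of the normalized exact importance weight. The value at `x = 0` is the junk value `0`. -/
noncomputable def ctML (v x : ℝ) : ℝ :=
  ((v + 1) * Real.exp x - 1) / x

theorem hasDerivAt_ctML (v : ℝ) {x : ℝ} (hx : x ≠ 0) :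
    HasDerivAt (ctML v) ((1 - (v + 1) * Real.exp x * (1 - x)) / x ^ 2) x := by
  have hnum : HasDerivAt (fun y ↦ (v + 1) * Real.exp y - 1) ((v + 1) * Real.exp x) x :=
    ((Real.hasDerivAt_exp x).const_mul (v + 1)).sub_const 1
  exact (hnum.fun_div (hasDerivAt_id' x) hx).congr_deriv (by ring)

theorem mul_exp_mul_one_sub_eq_one_of_isLocalMin_ctML {v x : ℝ} (hx : x ≠ 0)
    (hmin : IsLocalMin (ctML v) x) : (v + 1) * Real.exp x * (1 - x) = 1 := by
  have hderiv := hmin.hasDerivAt_eq_zero (hasDerivAt_ctML v hx)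
  have hnum := (div_eq_zero_iff.mp hderiv).resolve_right (pow_ne_zero 2 hx)
  exact (sub_eq_zero.mp hnum).symm

theorem strictAntiOn_exp_mul_one_sub :
    StrictAntiOn (fun x : ℝ ↦ Real.exp x * (1 - x)) (Ici 0) := by
  have hderiv (x : ℝ) : HasDerivAt (fun y ↦ Real.exp y * (1 - y)) (-(x * Real.exp x)) x :=
    ((Real.hasDerivAt_exp x).fun_mul ((hasDerivAt_id' x).const_sub 1)).congr_deriv (by ring)
  refine strictAntiOn_of_deriv_neg (convex_Ici 0) (by fun_prop) fun x hx ↦ ?_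
  rw [interior_Ici, mem_Ioi] at hx
  rw [(hderiv x).deriv]
  exact neg_neg_of_pos (mul_pos hx (Real.exp_pos x))

section FirstOrderCondition

variable {c x : ℝ}

theorem lt_one_of_mul_exp_mul_one_sub_eq_one (hc : 0 ≤ c)
    (h : c * Real.exp x * (1 - x) = 1) : x < 1 := by
  have hpos : 0 < c * Real.exp x * (1 - x) := one_pos.trans_eq h.symm
  exact sub_pos.mp (pos_of_mul_pos_right hpos (mul_nonneg hc (Real.exp_pos x).le))

theorem lt_of_mul_exp_mul_one_sub_eq_one {d y : ℝ} (hc : 0 < c) (hcd : c < d)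
    (hx : 0 ≤ x) (hy : 0 ≤ y) (hcx : c * Real.exp x * (1 - x) = 1)
    (hdy : d * Real.exp y * (1 - y) = 1) : x < y := by
  rw [mul_assoc] at hcx hdy
  refine (strictAntiOn_exp_mul_one_sub.lt_iff_gt hy hx).mp ?_
  calc
    Real.exp y * (1 - y) = d⁻¹ := eq_inv_of_mul_eq_one_right hdy
    _ < c⁻¹ := inv_strictAnti₀ hc hcd
    _ = Real.exp x * (1 - x) := (eq_inv_of_mul_eq_one_right hcx).symm

theorem one_sub_inv_le_of_mul_exp_mul_one_sub_eq_one (hc : 0 < c) (hx : 0 ≤ x)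
    (h : c * Real.exp x * (1 - x) = 1) : 1 - c⁻¹ ≤ x := by
  have hx1 := lt_one_of_mul_exp_mul_one_sub_eq_one hc.le h
  rw [mul_assoc] at h
  have hle : 1 - x ≤ c⁻¹ := calc
    1 - x ≤ Real.exp x * (1 - x) :=
      le_mul_of_one_le_left (sub_nonneg.mpr hx1.le) (Real.one_le_exp hx)
    _ = c⁻¹ := eq_inv_of_mul_eq_one_right h
  exact sub_le_comm.mp hle

end FirstOrderCondition

theorem tendsto_one_of_mul_exp_mul_one_sub_eq_one {ι : Type*} {l : Filter ι} {c x : ι → ℝ}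
    (hc : Tendsto c l atTop) (hx : ∀ᶠ i in l, 0 ≤ x i)
    (h : ∀ᶠ i in l, c i * Real.exp (x i) * (1 - x i) = 1) : Tendsto x l (nhds 1) := by
  have hlower : Tendsto (fun i ↦ 1 - (c i)⁻¹) l (nhds 1) := by
    simpa only [Pi.inv_apply, sub_zero] using hc.inv_tendsto_atTop.const_sub 1
  refine tendsto_of_tendsto_of_tendsto_of_le_of_le' hlower tendsto_const_nhds ?_ ?_
  · filter_upwards [hc.eventually_gt_atTop 0, hx, h] with i hci hxi hi
    exact one_sub_inv_le_of_mul_exp_mul_one_sub_eq_one hci hxi hi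
  · filter_upwards [hc.eventually_ge_atTop 0, h] with i hci hi
    exact (lt_one_of_mul_exp_mul_one_sub_eq_one hci hi).le

/-- **Proposition A1(ii).**  For `v > 0`, let `xstar v` be the (unique)
minimizer on `(0, ∞)` of the marginal-likelihood computing-time function
`CT_ML x = ((v+1) * exp x - 1) / x`.  Then `xstar v` lies in `(0, 1)`,
satisfies the first-order condition `(v+1) * exp (xstar v) * (1 - xstar v) = 1`,
is strictly increasing as a function of `v` on `(0, ∞)`, and converges to `1`
as `v → ∞`. -/
theorem marginal_likelihood_optimal_loglik_variance
    (xstar : ℝ → ℝ)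
    (hmin : ∀ v : ℝ, 0 < v → 0 < xstar v ∧ ∀ y : ℝ, 0 < y →
      ((v + 1) * Real.exp (xstar v) - 1) / xstar v
        ≤ ((v + 1) * Real.exp y - 1) / y) :
    (∀ v : ℝ, 0 < v → xstar v ∈ Ioo (0 : ℝ) 1
      ∧ (v + 1) * Real.exp (xstar v) * (1 - xstar v) = 1)
    ∧ StrictMonoOn xstar (Ioi (0 : ℝ))
    ∧ Tendsto xstar atTop (nhds 1) := by
  have hpos (v : ℝ) (hv : 0 < v) : 0 < xstar v := (hmin v hv).1
  have hfoc (v : ℝ) (hv : 0 < v) : (v + 1) * Real.exp (xstar v) * (1 - xstar v) = 1 := by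
    have hlocal : IsLocalMin (ctML v) (xstar v) :=
      eventually_of_mem (Ioi_mem_nhds (hpos v hv)) (hmin v hv).2
    exact mul_exp_mul_one_sub_eq_one_of_isLocalMin_ctML (hpos v hv).ne' hlocal
  refine ⟨fun v hv ↦ ⟨⟨hpos v hv, ?_⟩, hfoc v hv⟩, fun v hv w hw hvw ↦ ?_, ?_⟩
  · exact lt_one_of_mul_exp_mul_one_sub_eq_one (add_pos hv one_pos).le (hfoc v hv)
  · exact lt_of_mul_exp_mul_one_sub_eq_one (add_pos hv one_pos) (by gcongr)
      (hpos v hv).le (hpos w hw).le (hfoc v hv) (hfoc w hw)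
  · have hpos_ev := eventually_gt_atTop (0 : ℝ)
    exact tendsto_one_of_mul_exp_mul_one_sub_eq_one
      (tendsto_atTop_add_const_right atTop 1 tendsto_id)
      (hpos_ev.mono fun v hv ↦ (hpos v hv).le) (hpos_ev.mono hfoc)
end
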